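/- arXiv:1902.05438 — 2 statements merged into one kernel-verified Lean document; each statement's English description precedes it below -/
import Mathlib

section
/- Let d ≥ 1, let Λ be a full-rank lattice in ℝ^d, let N ≥ 1, and let v₁, …, v_N ∈ ℝ^d satisfy v_j − v_k ∉ Λ whenever j ≠ k. Let p : ℝ → ℝ be nonnegative on (0,∞), and let f : ℝ^d → ℂ be a Schwartz function that is real-valued, satisfies Re f(x) ≤ p(|x|) for all x ≠ 0, and whose Fourier transform f̂(y) = ∫_{ℝ^d} f(x) e^{−2πi⟨x,y⟩} dx is real-valued and nonnegative for all y. Then, in the extended nonnegative reals [0,∞], (1/N) · Σ_{j,k=1}^{N} Σ_{x ∈ Λ, x + v_j − v_k ≠ 0} p(|x + v_j − v_k|) ≥ (N / covol(Λ)) · f̂(0) − f(0), where the right-hand side is the extended-real value ENNReal.ofReal of the indicated real number. -/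
open scoped ENNReal Classical

noncomputable section

/-- The Fourier transform `f̂(y) = ∫ f(x) e^{-2πi⟨x,y⟩} dx` of a Schwartz function. -/
def FT {d : ℕ} (f : SchwartzMap (EuclideanSpace ℝ (Fin d)) ℂ) :
    SchwartzMap (EuclideanSpace ℝ (Fin d)) ℂ :=
  SchwartzMap.fourierTransformCLM ℂ f

open MeasureTheory UnitAddTorus

/-- The real vector attached to an integer vector. -/
def zc {ι : Type*} (m : ι → ℤ) : ι → ℝ := fun i => (m i : ℝ)

/-- The class of a real vector in the torus. -/
def tor {ι : Type*} (t : ι → ℝ) : UnitAddTorus ι := fun i => (t i : UnitAddCircle)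

lemma zc_add {ι : Type*} (m n : ι → ℤ) : zc (m + n) = zc m + zc n := by
  ext i; simp [zc]

/-- Integer vectors as the lattice spanned by the standard basis. -/
def zEquiv (ι : Type*) [Fintype ι] :
    Submodule.span ℤ (Set.range (Pi.basisFun ℝ ι)) ≃ (ι → ℤ) :=
  ((Pi.basisFun ℝ ι).restrictScalars ℤ).equivFun.toEquiv

lemma zEquiv_coe (ι : Type*) [Fintype ι]
    (x : Submodule.span ℤ (Set.range (Pi.basisFun ℝ ι))) :
    zc (zEquiv ι x) = (x : ι → ℝ) := by
  ext i
  have := (Pi.basisFun ℝ ι).restrictScalars_repr_apply ℤ x i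
  simpa [zc, zEquiv] using this

lemma summable_zc {ι : Type*} [Fintype ι] :
    Summable (fun m : ι → ℤ => ((1 + ‖zc m‖) ^ (Fintype.card ι + 1))⁻¹) := by
  rw [← (zEquiv ι).summable_iff]
  have hr : Module.finrank ℤ (Submodule.span ℤ (Set.range (Pi.basisFun ℝ ι)))
      < Fintype.card ι + 1 := by
    rw [Module.finrank_eq_card_basis ((Pi.basisFun ℝ ι).restrictScalars ℤ)]; omega
  have := ZLattice.summable_norm_pow_inv (Submodule.span ℤ (Set.range (Pi.basisFun ℝ ι))) _ hr
  refine Summable.of_norm_bounded_eventually this ?_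
  refine (Set.finite_singleton 0).subset ?_
  intro x hx
  by_contra h0
  apply hx
  have h0' : 0 < ‖x‖ := norm_pos_iff.2 h0
  simp only [Function.comp, zEquiv_coe]
  change ‖((1 + ‖(x : ι → ℝ)‖) ^ (Fintype.card ι + 1))⁻¹‖ ≤ ‖x‖⁻¹ ^ (Fintype.card ι + 1)
  rw [Real.norm_of_nonneg (by positivity), inv_pow]
  have e : ‖(x : ι → ℝ)‖ = ‖x‖ := rfl
  rw [e]
  gcongr
  linarith

lemma schwartz_bound {V : Type*} [NormedAddCommGroup V] [NormedSpace ℝ V]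
    (g : SchwartzMap V ℂ) (k : ℕ) :
    ∃ C : ℝ, 0 ≤ C ∧ ∀ t, ‖g t‖ ≤ C * ((1 + ‖t‖) ^ k)⁻¹ := by
  refine ⟨2 ^ k * ((Finset.Iic (k, 0)).sup fun m => SchwartzMap.seminorm ℝ m.1 m.2) g,
    by positivity, fun t => ?_⟩
  have := SchwartzMap.one_add_le_sup_seminorm_apply (𝕜 := ℝ) (m := (k, 0)) le_rfl le_rfl g t
  rw [norm_iteratedFDeriv_zero] at this
  rw [← div_eq_mul_inv, le_div_iff₀ (by positivity), mul_comm]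
  exact this

lemma schwartz_shift_bound {ι : Type*} [Fintype ι]
    (g : SchwartzMap (ι → ℝ) ℂ) (k : ℕ) (R : ℝ) (hR : 0 ≤ R) :
    ∃ C : ℝ, 0 ≤ C ∧ ∀ t m, ‖t‖ ≤ R → ‖g (zc m + t)‖ ≤ C * ((1 + ‖zc m‖) ^ k)⁻¹ := by
  obtain ⟨C, hC, h⟩ := schwartz_bound g k
  refine ⟨C * (1 + R) ^ k, by positivity, fun t m ht => (h _).trans ?_⟩
  rw [mul_assoc]
  gcongr
  rw [← div_eq_mul_inv, le_div_iff₀ (by positivity), inv_mul_le_iff₀ (by positivity), ← mul_pow]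
  gcongr
  have h1 : ‖zc m‖ ≤ ‖zc m + t‖ + ‖t‖ := by
    simpa using norm_sub_le (zc m + t) t
  nlinarith [norm_nonneg (zc m + t), norm_nonneg t]

lemma summable_shift {ι : Type*} [Fintype ι] (g : SchwartzMap (ι → ℝ) ℂ) (t : ι → ℝ) :
    Summable (fun m : ι → ℤ => g (zc m + t)) := by
  obtain ⟨C, hC, h⟩ := schwartz_shift_bound g (Fintype.card ι + 1) ‖t‖ (norm_nonneg _)
  exact Summable.of_norm_bounded (summable_zc.mul_left C) (fun m => h t m le_rfl)

/-- The periodization on the vector space. -/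
def per {ι : Type*} [Fintype ι] (g : SchwartzMap (ι → ℝ) ℂ) (t : ι → ℝ) : ℂ :=
  ∑' m : ι → ℤ, g (zc m + t)

lemma per_continuous {ι : Type*} [Fintype ι] (g : SchwartzMap (ι → ℝ) ℂ) :
    Continuous (per g) := by
  rw [continuous_iff_continuousAt]
  intro t
  obtain ⟨C, hC, h⟩ := schwartz_shift_bound g (Fintype.card ι + 1) (‖t‖ + 1) (by positivity)
  have : ContinuousOn (per g) (Metric.ball 0 (‖t‖ + 1)) := by
    refine continuousOn_tsum (u := fun m => C * ((1 + ‖zc m‖) ^ (Fintype.card ι + 1))⁻¹)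
      (fun m => ?_) (summable_zc.mul_left C) (fun m x hx => ?_)
    · exact (g.continuous.comp (by fun_prop)).continuousOn
    · exact h x m (by simpa using (Metric.mem_ball.1 hx).le)
  exact this.continuousAt (Metric.isOpen_ball.mem_nhds (by simp))

lemma per_add {ι : Type*} [Fintype ι] (g : SchwartzMap (ι → ℝ) ℂ) (t : ι → ℝ) (n : ι → ℤ) :
    per g (zc n + t) = per g t := by
  unfold per
  rw [← (Equiv.addRight n).tsum_eq (fun m => g (zc m + t))]
  simp [zc_add, add_assoc]

lemma tor_quot (ι : Type*) [Fintype ι] : IsOpenQuotientMap (tor : (ι → ℝ) → UnitAddTorus ι) :=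
  IsOpenQuotientMap.piMap (fun _ => QuotientAddGroup.isOpenQuotientMap_mk)

lemma tor_continuous {ι : Type*} [Fintype ι] : Continuous (tor : (ι → ℝ) → UnitAddTorus ι) :=
  (tor_quot ι).continuous

lemma per_factor {ι : Type*} [Fintype ι] (g : SchwartzMap (ι → ℝ) ℂ) (s t : ι → ℝ)
    (h : tor s = tor t) : per g s = per g t := by
  have : ∀ i, ∃ n : ℤ, s i = n + t i := by
    intro i
    have := congrFun h i
    simp only [tor] at this
    rw [QuotientAddGroup.eq, AddSubgroup.mem_zmultiples_iff] at this
    obtain ⟨k, hk⟩ := this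
    refine ⟨-k, ?_⟩
    simp at hk ⊢
    linarith
  choose n hn using this
  rw [← per_add g t n]
  congr 1
  ext i
  simp [zc, hn]

/-- The periodization on the torus. -/
def perT {ι : Type*} [Fintype ι] (g : SchwartzMap (ι → ℝ) ℂ) : C(UnitAddTorus ι, ℂ) :=
  Topology.IsQuotientMap.lift (f := ⟨tor, tor_continuous⟩) (tor_quot ι).isQuotientMap
    ⟨per g, per_continuous g⟩ (fun s t h => per_factor g s t h)

lemma perT_tor {ι : Type*} [Fintype ι] (g : SchwartzMap (ι → ℝ) ℂ) (t : ι → ℝ) :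
    perT g (tor t) = per g t := by
  have := Topology.IsQuotientMap.lift_comp (f := ⟨tor, tor_continuous⟩) (tor_quot ι).isQuotientMap ⟨per g, per_continuous g⟩
    (fun s t h => per_factor g s t h)
  exact congrArg (fun q => q t) this

lemma tor_zc_add {ι : Type*} (t : ι → ℝ) (n : ι → ℤ) : tor (zc n + t) = tor t := by
  ext i
  simp [tor, zc]

lemma norm_mFourier_apply {ι : Type*} [Fintype ι] (n : ι → ℤ) (x : UnitAddTorus ι) :
    ‖mFourier n x‖ = 1 := by
  simp only [mFourier, ContinuousMap.coe_mk, norm_prod, fourier_apply, Circle.norm_coe,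
    Finset.prod_const_one]

lemma perT_coeff {ι : Type*} [Fintype ι] (g : SchwartzMap (ι → ℝ) ℂ) (n : ι → ℤ) :
    mFourierCoeff (perT g) n = ∫ t, mFourier (-n) (tor t) * g t := by
  have hgi : Integrable (fun t => mFourier (-n) (tor t) * g t) := by
    refine g.integrable.bdd_mul (c := 1) ?_ ?_
    · exact ((mFourier (-n)).continuous.comp tor_continuous).aestronglyMeasurable
    · exact Filter.Eventually.of_forall (fun t => (norm_mFourier_apply _ _).le)
  rw [mFourierCoeff_eq_integral _ _ 0]
  have hs : ({x : ι → ℝ | ∀ i, x i ∈ Set.Ioc ((0 : ι → ℝ) i) ((0 : ι → ℝ) i + 1)} : Set (ι → ℝ))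
      =ᵐ[volume] ZSpan.fundamentalDomain (Pi.basisFun ℝ ι) := by
    rw [ZSpan.fundamentalDomain_pi_basisFun]
    have e : ({x : ι → ℝ | ∀ i, x i ∈ Set.Ioc ((0 : ι → ℝ) i) ((0 : ι → ℝ) i + 1)} : Set (ι → ℝ))
      = Set.pi Set.univ fun i => Set.Ioc ((0 : ι → ℝ) i) ((1 : ι → ℝ) i) := by
      ext x; simp [Set.mem_pi]
    rw [e]
    exact Measure.univ_pi_Ioc_ae_eq_Icc.trans
      (Measure.univ_pi_Ico_ae_eq_Icc (f := (0 : ι → ℝ)) (g := 1)).symm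
  rw [setIntegral_congr_set hs]
  have : VAddInvariantMeasure (Submodule.span ℤ (Set.range (Pi.basisFun ℝ ι))) (ι → ℝ) volume :=
    inferInstanceAs <| VAddInvariantMeasure
      (Submodule.span ℤ (Set.range (Pi.basisFun ℝ ι))).toAddSubgroup (ι → ℝ) volume
  rw [(ZSpan.isAddFundamentalDomain (Pi.basisFun ℝ ι) volume).integral_eq_tsum'' _ hgi]
  set D := ZSpan.fundamentalDomain (Pi.basisFun ℝ ι) with hD
  have hDm : MeasurableSet D := ZSpan.fundamentalDomain_measurableSet _
  have hvol : volume D = 1 := by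
    rw [hD, ZSpan.fundamentalDomain_pi_basisFun, volume_pi_pi]; simp
  have : IsFiniteMeasure (volume.restrict D) := ⟨by simp [hvol]⟩
  have hDn : ∀ x ∈ D, ‖x‖ ≤ 1 := by
    intro x hx
    rw [hD, ZSpan.fundamentalDomain_pi_basisFun] at hx
    rw [pi_norm_le_iff_of_nonneg zero_le_one]
    intro i
    have := hx i trivial
    rw [Real.norm_of_nonneg this.1]; exact this.2.le
  have e1 : ∀ x : Submodule.span ℤ (Set.range (Pi.basisFun ℝ ι)),
      (∫ t in D, mFourier (-n) (tor (x +ᵥ t)) * g (x +ᵥ t))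
      = (fun m : ι → ℤ => ∫ t in D, mFourier (-n) (tor t) * g (zc m + t)) (zEquiv ι x) := by
    intro x
    have e : ∀ t : ι → ℝ, x +ᵥ t = zc (zEquiv ι x) + t := by
      intro t; rw [zEquiv_coe]; rfl
    simp only [e, tor_zc_add]
  rw [tsum_congr e1, (zEquiv ι).tsum_eq
    (fun m : ι → ℤ => ∫ t in D, mFourier (-n) (tor t) * g (zc m + t))]
  obtain ⟨C, hC, hb⟩ := schwartz_shift_bound g (Fintype.card ι + 1) 1 zero_le_one
  have hcont : ∀ m : ι → ℤ, Continuous (fun t => mFourier (-n) (tor t) * g (zc m + t)) := by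
    intro m
    exact ((mFourier (-n)).continuous.comp tor_continuous).mul (g.continuous.comp (by fun_prop))
  have hbd : ∀ m : ι → ℤ, ∀ t ∈ D, ‖mFourier (-n) (tor t) * g (zc m + t)‖
      ≤ C * ((1 + ‖zc m‖) ^ (Fintype.card ι + 1))⁻¹ := by
    intro m t ht
    rw [norm_mul, norm_mFourier_apply, one_mul]
    exact hb t m (hDn t ht)
  have hI : ∀ m : ι → ℤ, Integrable (fun t => mFourier (-n) (tor t) * g (zc m + t))
      (volume.restrict D) := by
    intro m
    refine Integrable.of_bound (hcont m).aestronglyMeasurable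
      (C * ((1 + ‖zc m‖) ^ (Fintype.card ι + 1))⁻¹) ?_
    exact (ae_restrict_iff' hDm).2 (Filter.Eventually.of_forall (hbd m))
  rw [integral_tsum_of_summable_integral_norm hI]
  · refine setIntegral_congr_fun hDm (fun t ht => ?_)
    change mFourier (-n) (tor t) • perT g (tor t) = _
    rw [perT_tor, smul_eq_mul, per, tsum_mul_left]
  · refine Summable.of_nonneg_of_le (fun m => by positivity) (fun m => ?_) (summable_zc.mul_left C)
    have := norm_setIntegral_le_of_norm_le_const (μ := volume) (s := D)
      (f := fun t => (‖mFourier (-n) (tor t) * g (zc m + t)‖ : ℝ))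
      (C := C * ((1 + ‖zc m‖) ^ (Fintype.card ι + 1))⁻¹) (by simp [hvol])
      (fun t ht => by rw [norm_norm]; exact hbd m t ht)
    simp only [Measure.real, hvol, ENNReal.toReal_one, mul_one] at this
    exact (le_abs_self _).trans this

lemma poisson {ι : Type*} [Fintype ι] (g : SchwartzMap (ι → ℝ) ℂ)
    (h : Summable (fun n : ι → ℤ => ∫ t, mFourier (-n) (tor t) * g t)) (t : ι → ℝ) :
    HasSum (fun n : ι → ℤ => (∫ t, mFourier (-n) (tor t) * g t) * mFourier n (tor t))
      (∑' m : ι → ℤ, g (zc m + t)) := by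
  have h' : Summable (mFourierCoeff (perT g)) := by
    refine h.congr (fun n => ?_)
    rw [perT_coeff]
  have := hasSum_mFourier_series_apply_of_summable h' (tor t)
  simp only [perT_coeff, perT_tor, smul_eq_mul] at this
  exact this

lemma mFourier_tor {ι : Type*} [Fintype ι] (n : ι → ℤ) (t : ι → ℝ) :
    mFourier n (tor t)
      = Complex.exp (((2 * Real.pi * ∑ i, (n i : ℝ) * t i : ℝ) : ℂ) * Complex.I) := by
  simp only [mFourier, ContinuousMap.coe_mk, tor, fourier_coe_apply]
  rw [← Complex.exp_sum]
  congr 1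
  push_cast
  rw [Finset.mul_sum, Finset.sum_mul]
  refine Finset.sum_congr rfl (fun i _ => ?_)
  ring

lemma mFourier_tor_sub {ι : Type*} [Fintype ι] (n : ι → ℤ) (s t : ι → ℝ) :
    mFourier n (tor (s - t))
      = mFourier n (tor s) * (starRingEnd ℂ) (mFourier n (tor t)) := by
  rw [← mFourier_neg, mFourier_tor, mFourier_tor, mFourier_tor, ← Complex.exp_add]
  congr 1
  rw [← add_mul]
  congr 1
  rw [← Complex.ofReal_add]
  congr 1
  rw [← mul_add, ← Finset.sum_add_distrib]
  congr 1
  refine Finset.sum_congr rfl (fun i _ => ?_)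
  simp
  ring

section lattice

variable {d : ℕ} (Λ : Submodule ℤ (EuclideanSpace ℝ (Fin d))) [DiscreteTopology Λ]
  [IsZLattice ℝ Λ]

/-- A real basis adapted to the lattice. -/
def latB {ι : Type*} (b : Module.Basis ι ℤ Λ) : Module.Basis ι ℝ (EuclideanSpace ℝ (Fin d)) :=
  b.ofZLatticeBasis ℝ Λ

lemma lat_map {ι : Type*} [Fintype ι] (b : Module.Basis ι ℤ Λ) :
    Measure.map ((latB Λ b).equivFunL.symm) (volume : Measure (ι → ℝ))
      = (ENNReal.ofReal (ZLattice.covolume Λ))⁻¹ • volume := by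
  ext s hs
  rw [Measure.map_apply (latB Λ b).equivFunL.symm.continuous.measurable hs]
  have := ZLattice.volume_image_eq_volume_div_covolume' Λ b hs.nullMeasurableSet
  rw [Measure.smul_apply, smul_eq_mul, mul_comm, ← div_eq_mul_inv, ← this]
  congr 1
  exact ((latB Λ b).equivFunL.toEquiv.image_eq_preimage_symm s).symm

/-- The dual vector attached to an integer vector. -/
def dualVec {ι : Type*} [Fintype ι] (b : Module.Basis ι ℤ Λ) (n : ι → ℤ) :
    EuclideanSpace ℝ (Fin d) :=
  (InnerProductSpace.toDual ℝ (EuclideanSpace ℝ (Fin d))).symm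
    (∑ i, (n i : ℝ) • ((ContinuousLinearMap.proj (R := ℝ) (φ := fun _ : ι => ℝ) i).comp
      ((latB Λ b).equivFunL : EuclideanSpace ℝ (Fin d) →L[ℝ] (ι → ℝ))))

lemma inner_dualVec {ι : Type*} [Fintype ι] (b : Module.Basis ι ℤ Λ) (n : ι → ℤ)
    (x : EuclideanSpace ℝ (Fin d)) :
    inner ℝ x (dualVec Λ b n) = ∑ i, (n i : ℝ) * (latB Λ b).equivFunL x i := by
  rw [real_inner_comm, dualVec, InnerProductSpace.toDual_symm_apply]
  simp

lemma coeff_eq {ι : Type*} [Fintype ι] (b : Module.Basis ι ℤ Λ)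
    (f : SchwartzMap (EuclideanSpace ℝ (Fin d)) ℂ) (n : ι → ℤ) :
    (∫ t, mFourier (-n) (tor t) *
      SchwartzMap.compCLMOfContinuousLinearEquiv ℂ (latB Λ b).equivFunL.symm f t)
      = ((ZLattice.covolume Λ)⁻¹ : ℝ) * FT f (dualVec Λ b n) := by
  have h1 : FT f (dualVec Λ b n) = ∫ x, Complex.exp
      ((↑(-2 * Real.pi * inner ℝ x (dualVec Λ b n)) * Complex.I)) • f x :=
    Real.fourier_eq' (f : EuclideanSpace ℝ (Fin d) → ℂ) (dualVec Λ b n)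
  have h2 := integral_map_equiv (μ := (volume : Measure (ι → ℝ)))
    (latB Λ b).equivFunL.symm.toHomeomorph.toMeasurableEquiv (fun x => Complex.exp
      ((↑(-2 * Real.pi * inner ℝ x (dualVec Λ b n)) * Complex.I)) • f x)
  have h3 : Measure.map ((latB Λ b).equivFunL.symm.toHomeomorph.toMeasurableEquiv)
      (volume : Measure (ι → ℝ)) = (ENNReal.ofReal (ZLattice.covolume Λ))⁻¹ • volume :=
    lat_map Λ b
  rw [h3, integral_smul_measure, ← h1] at h2
  have hc : 0 < ZLattice.covolume Λ := ZLattice.covolume_pos Λ volume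
  rw [ENNReal.toReal_inv, ENNReal.toReal_ofReal hc.le, Complex.real_smul] at h2
  rw [h2]
  refine integral_congr_ae (Filter.Eventually.of_forall fun t => ?_)
  change _ = Complex.exp ((↑(-2 * Real.pi * inner ℝ ((latB Λ b).equivFunL.symm t)
    (dualVec Λ b n)) * Complex.I)) • f ((latB Λ b).equivFunL.symm t)
  rw [inner_dualVec, ContinuousLinearEquiv.apply_symm_apply]
  simp only [mFourier_tor, smul_eq_mul]
  congr 3
  simp

lemma coeff_summable {ι : Type*} [Fintype ι] (b : Module.Basis ι ℤ Λ)
    (f : SchwartzMap (EuclideanSpace ℝ (Fin d)) ℂ) :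
    Summable (fun n : ι → ℤ => FT f (dualVec Λ b n)) := by
  set k := Fintype.card ι + 1
  obtain ⟨C, hC, h⟩ := schwartz_bound (FT f) k
  set B : ℝ := 1 + ∑ i, ‖latB Λ b i‖
  have hB : 1 ≤ B := by
    have : 0 ≤ ∑ i, ‖latB Λ b i‖ := Finset.sum_nonneg (fun i _ => norm_nonneg _)
    simp only [B]; linarith
  have key : ∀ n : ι → ℤ, 1 + ‖zc n‖ ≤ B * (1 + ‖dualVec Λ b n‖) := by
    intro n
    have : ‖zc n‖ ≤ B * ‖dualVec Λ b n‖ := by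
      rw [pi_norm_le_iff_of_nonneg (by positivity)]
      intro i
      have e : zc n i = inner ℝ (latB Λ b i) (dualVec Λ b n) := by
        rw [inner_dualVec]
        simp [zc, Finsupp.single_apply]
      rw [e]
      refine (norm_inner_le_norm _ _).trans ?_
      gcongr
      have := Finset.single_le_sum (f := fun i => ‖latB Λ b i‖) (fun i _ => norm_nonneg _)
        (Finset.mem_univ i)
      simp only [B]
      linarith
    linarith
  refine Summable.of_norm_bounded (summable_zc.mul_left (C * B ^ k)) (fun n => (h _).trans ?_)
  rw [mul_assoc]
  gcongr
  rw [← div_eq_mul_inv, le_div_iff₀ (by positivity), inv_mul_le_iff₀ (by positivity), ← mul_pow,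
    mul_comm _ B]
  exact pow_le_pow_left₀ (by positivity) (key n) _

/-- Coordinates of lattice vectors. -/
lemma lat_coord {ι : Type*} [Fintype ι] (b : Module.Basis ι ℤ Λ) (x : Λ) :
    zc (b.equivFun x) = (latB Λ b).equivFunL (x : EuclideanSpace ℝ (Fin d)) := by
  ext i
  have := b.ofZLatticeBasis_repr_apply ℝ Λ x i
  simpa [zc, latB] using this.symm

lemma lat_term {ι : Type*} [Fintype ι] (b : Module.Basis ι ℤ Λ)
    (f : SchwartzMap (EuclideanSpace ℝ (Fin d)) ℂ) (w : EuclideanSpace ℝ (Fin d)) (x : Λ) :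
    SchwartzMap.compCLMOfContinuousLinearEquiv ℂ (latB Λ b).equivFunL.symm f
      (zc (b.equivFun x) + (latB Λ b).equivFunL w) = f (x + w) := by
  rw [lat_coord, ← map_add]
  simp

lemma lat_summable (f : SchwartzMap (EuclideanSpace ℝ (Fin d)) ℂ)
    (w : EuclideanSpace ℝ (Fin d)) : Summable (fun x : Λ => f (x + w)) := by
  have : Module.Finite ℤ Λ := ZLattice.module_finite ℝ Λ
  have : Module.Free ℤ Λ := ZLattice.module_free ℝ Λ
  let b := Module.Free.chooseBasis ℤ Λ
  have h := summable_shift (SchwartzMap.compCLMOfContinuousLinearEquiv ℂ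
    (latB Λ b).equivFunL.symm f) ((latB Λ b).equivFunL w)
  rw [← b.equivFun.toEquiv.summable_iff] at h
  exact h.congr (fun x => lat_term Λ b f w x)

lemma lat_poisson {ι : Type*} [Fintype ι] (b : Module.Basis ι ℤ Λ)
    (f : SchwartzMap (EuclideanSpace ℝ (Fin d)) ℂ) (w : EuclideanSpace ℝ (Fin d)) :
    HasSum (fun n : ι → ℤ => (((ZLattice.covolume Λ)⁻¹ : ℝ) * FT f (dualVec Λ b n)) *
      mFourier n (tor ((latB Λ b).equivFunL w))) (∑' x : Λ, f (x + w)) := by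
  have h := poisson (SchwartzMap.compCLMOfContinuousLinearEquiv ℂ
    (latB Λ b).equivFunL.symm f) (by
      simp only [coeff_eq]
      exact (coeff_summable Λ b f).mul_left _) ((latB Λ b).equivFunL w)
  simp only [coeff_eq] at h
  rw [← b.equivFun.toEquiv.tsum_eq] at h
  convert h using 3 with x
  exact (lat_term Λ b f w x).symm

lemma energy_lower (N : ℕ) (v : Fin N → EuclideanSpace ℝ (Fin d))
    (f : SchwartzMap (EuclideanSpace ℝ (Fin d)) ℂ)
    (hfhat_real : ∀ y, ((FT f) y).im = 0)
    (hfhat_nonneg : ∀ y, 0 ≤ ((FT f) y).re) :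
    (N : ℝ) * (((N : ℝ) / ZLattice.covolume Λ) * ((FT f) 0).re)
      ≤ ∑ j, ∑ k, (∑' x : Λ, f (x + (v j - v k))).re := by
  have : Module.Finite ℤ Λ := ZLattice.module_finite ℝ Λ
  have : Module.Free ℤ Λ := ZLattice.module_free ℝ Λ
  let b := Module.Free.chooseBasis ℤ Λ
  have hc : 0 < ZLattice.covolume Λ := ZLattice.covolume_pos Λ volume
  have h1 : HasSum (fun n : Module.Free.ChooseBasisIndex ℤ Λ → ℤ => ∑ j, ∑ k,
      (((ZLattice.covolume Λ)⁻¹ : ℝ) * FT f (dualVec Λ b n)) *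
      mFourier n (tor ((latB Λ b).equivFunL (v j - v k))))
      (∑ j, ∑ k, ∑' x : Λ, f (x + (v j - v k))) :=
    hasSum_sum fun j _ => hasSum_sum fun k _ => lat_poisson Λ b f (v j - v k)
  have h2 := Complex.hasSum_re h1
  have e : ∀ n : Module.Free.ChooseBasisIndex ℤ Λ → ℤ, (∑ j, ∑ k,
      (((ZLattice.covolume Λ)⁻¹ : ℝ) * FT f (dualVec Λ b n)) *
      mFourier n (tor ((latB Λ b).equivFunL (v j - v k)))).re
      = (ZLattice.covolume Λ)⁻¹ * (FT f (dualVec Λ b n)).re *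
        Complex.normSq (∑ j, mFourier n (tor ((latB Λ b).equivFunL (v j)))) := by
    intro n
    have e1 : FT f (dualVec Λ b n) = ((FT f (dualVec Λ b n)).re : ℂ) := by
      apply Complex.ext <;> simp [hfhat_real]
    rw [e1]
    simp only [map_sub, mFourier_tor_sub, ← Finset.mul_sum]
    rw [← Finset.sum_mul, ← map_sum (starRingEnd ℂ), Complex.mul_conj, Complex.ofReal_re, ← Complex.ofReal_mul,
      ← Complex.ofReal_mul, Complex.ofReal_re]
  simp only [e] at h2
  have h3 := le_hasSum h2 0 (fun n _ => mul_nonneg (mul_nonneg (inv_nonneg.2 hc.le)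
    (hfhat_nonneg _)) (Complex.normSq_nonneg _))
  have e0 : dualVec Λ b 0 = 0 := by simp [dualVec]
  rw [e0, mFourier_zero] at h3
  simp only [Complex.re_sum] at h3
  refine le_trans (le_of_eq ?_) h3
  simp [Complex.normSq_apply]
  ring

end lattice

lemma ofReal_tsum_le' {α : Type*} (q : α → ℝ) (hq : Summable q) :
    ENNReal.ofReal (∑' x, q x) ≤ ∑' x, ENNReal.ofReal (q x) := by
  have h : Summable (fun x => max (q x) 0) :=
    Summable.of_nonneg_of_le (fun x => le_max_right _ _)
      (fun x => max_le (le_abs_self _) (abs_nonneg _)) hq.abs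
  calc ENNReal.ofReal (∑' x, q x) ≤ ENNReal.ofReal (∑' x, max (q x) 0) :=
        ENNReal.ofReal_le_ofReal (hq.tsum_le_tsum (fun x => le_max_left _ _) h)
    _ = ∑' x, ENNReal.ofReal (max (q x) 0) :=
        ENNReal.ofReal_tsum_of_nonneg (fun x => le_max_right _ _) h
    _ = _ := by simp [ENNReal.ofReal_max]

/-- The linear programming bound for the energy of a periodic configuration `⋃_j (Λ + v_j)`:
if the Schwartz function `f` is real-valued with `f(x) ≤ p(|x|)` for `x ≠ 0`, and `f̂` is
real-valued and nonnegative, then the energy per point of the configuration is at least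
`(N/covol Λ)·f̂(0) − f(0)` (computed in `[0,∞]`). -/
theorem linear_programming_bound (d : ℕ) (hd : 1 ≤ d)
    (Λ : Submodule ℤ (EuclideanSpace ℝ (Fin d))) [DiscreteTopology Λ] [IsZLattice ℝ Λ]
    (N : ℕ) (hN : 1 ≤ N) (v : Fin N → EuclideanSpace ℝ (Fin d))
    (hv : ∀ j k : Fin N, j ≠ k → v j - v k ∉ Λ)
    (p : ℝ → ℝ) (hp : ∀ r : ℝ, 0 < r → 0 ≤ p r)
    (f : SchwartzMap (EuclideanSpace ℝ (Fin d)) ℂ)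
    (hf_real : ∀ x, (f x).im = 0)
    (hf_le : ∀ x : EuclideanSpace ℝ (Fin d), x ≠ 0 → (f x).re ≤ p ‖x‖)
    (hfhat_real : ∀ y, ((FT f) y).im = 0)
    (hfhat_nonneg : ∀ y, 0 ≤ ((FT f) y).re) :
    ENNReal.ofReal (((N : ℝ) / ZLattice.covolume Λ) * ((FT f) 0).re - (f 0).re)
      ≤ (N : ℝ≥0∞)⁻¹ *
        ∑' (j : Fin N) (k : Fin N) (x : Λ),
          if (x : EuclideanSpace ℝ (Fin d)) + v j - v k ≠ 0 then
            ENNReal.ofReal (p ‖(x : EuclideanSpace ℝ (Fin d)) + v j - v k‖)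
          else 0 := by
  have pair : ∀ j k : Fin N, ENNReal.ofReal
      ((∑' x : Λ, f (x + (v j - v k))).re - if j = k then (f 0).re else 0)
      ≤ ∑' x : Λ, if (x : EuclideanSpace ℝ (Fin d)) + v j - v k ≠ 0 then
            ENNReal.ofReal (p ‖(x : EuclideanSpace ℝ (Fin d)) + v j - v k‖)
          else 0 := by
    intro j k
    have hs := Complex.hasSum_re (lat_summable Λ f (v j - v k)).hasSum
    have hδ : HasSum (fun x : Λ => if x = 0 then (if j = k then (f 0).re else 0) else 0)
        (if j = k then (f 0).re else 0) := hasSum_ite_eq 0 _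
    have hd := hs.sub hδ
    rw [← hd.tsum_eq]
    refine (ofReal_tsum_le' _ hd.summable).trans (ENNReal.tsum_le_tsum fun x => ?_)
    rw [← add_sub_assoc]
    split_ifs with h1 h2 h3 h3 h4
    · subst h2
      simp [h1] at h3
    · subst h2
      simp [h1]
    · simp only [sub_zero]
      exact ENNReal.ofReal_le_ofReal (hf_le _ h3)
    · exfalso
      apply hv j k h2
      have : v j - v k = -(x : EuclideanSpace ℝ (Fin d)) := by
        rw [not_not] at h3
        rw [eq_neg_iff_add_eq_zero, ← h3]; abel
      rw [this]
      exact neg_mem x.2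
    · simp only [sub_zero]
      exact ENNReal.ofReal_le_ofReal (hf_le _ h4)
    · exfalso
      rw [not_not] at h4
      by_cases hjk : j = k
      · subst hjk
        simp at h4
        exact h1 h4
      · apply hv j k hjk
        have : v j - v k = -(x : EuclideanSpace ℝ (Fin d)) := by
          rw [eq_neg_iff_add_eq_zero, ← h4]; abel
        rw [this]
        exact neg_mem x.2
  have low := energy_lower Λ N v f hfhat_real hfhat_nonneg
  have hN0 : (N : ℝ≥0∞) ≠ 0 := by simp; omega
  rw [mul_comm (N : ℝ≥0∞)⁻¹, ← div_eq_mul_inv, ENNReal.le_div_iff_mul_le (Or.inl hN0) (Or.inl (by simp))]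
  rw [← ENNReal.ofReal_natCast, ← ENNReal.ofReal_mul' (by positivity)]
  rw [tsum_fintype]
  simp only [tsum_fintype (L := .unconditional (Fin N))]
  have sub : ∀ (a : Fin N → ℝ), ENNReal.ofReal (∑ j, a j) ≤ ∑ j, ENNReal.ofReal (a j) :=
    fun a => Finset.le_sum_of_subadditive _ ENNReal.ofReal_zero.le
      (fun _ _ => ENNReal.ofReal_add_le) _ _
  calc _ ≤ ENNReal.ofReal (∑ j, ∑ k,
        ((∑' x : Λ, f (x + (v j - v k))).re - if j = k then (f 0).re else 0)) := by
        apply ENNReal.ofReal_le_ofReal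
        simp only [Finset.sum_sub_distrib]
        simp
        linarith
    _ ≤ ∑ j, ∑ k, ENNReal.ofReal
        ((∑' x : Λ, f (x + (v j - v k))).re - if j = k then (f 0).re else 0) :=
        (sub _).trans (Finset.sum_le_sum fun j _ => sub _)
    _ ≤ _ := Finset.sum_le_sum fun j _ => Finset.sum_le_sum fun k _ => pair j k

end
end

section
/- Fix d ≥ 1 and a real number y > 0. Let G_y be the set of complex-valued Schwartz functions on ℝ^d of the form x ↦ exp(π i τ |x|²) for some τ ∈ ℂ with Im τ = y. Then every radial complex-valued Schwartz function on ℝ^d lies in the closure, in the Schwartz space topology, of the ℂ-linear span of G_y. In particular, the complex Gaussians x ↦ exp(π i τ |x|²) with Im τ = y span a dense subspace of the space of radial Schwartz functions. -/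
noncomputable section

/-- A function on `ℝ^d` is radial if its value depends only on the norm of the argument. -/
def IsRadial {d : ℕ} (f : EuclideanSpace ℝ (Fin d) → ℂ) : Prop :=
  ∀ x y : EuclideanSpace ℝ (Fin d), ‖x‖ = ‖y‖ → f x = f y

open scoped SchwartzMap ContDiff

theorem mem_closure_of_seminorm {E : Type*} [NormedAddCommGroup E] [NormedSpace ℝ E]
    (S : Set 𝓢(E, ℂ)) (f : 𝓢(E, ℂ))
    (h : ∀ N : ℕ, ∀ ε : ℝ, 0 < ε → ∃ g ∈ S, ∀ k ≤ N, ∀ n ≤ N,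
      SchwartzMap.seminorm ℝ k n (f - g) ≤ ε) : f ∈ closure S := by
  rw [mem_closure_iff_nhds]
  intro t ht
  rw [(schwartz_withSeminorms ℝ E ℂ).mem_nhds_iff] at ht
  obtain ⟨s, r, hr, hs⟩ := ht
  obtain ⟨g, hg, hgb⟩ := h (s.sup (fun p => p.1 + p.2)) (r / 2) (by positivity)
  refine ⟨g, hs ?_, hg⟩
  rw [Seminorm.mem_ball, ← map_neg_eq_map]
  refine lt_of_le_of_lt ?_ (half_lt_self hr)
  refine Seminorm.finset_sup_apply_le (by positivity) ?_
  intro p hp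
  have h1 : p.1 + p.2 ≤ s.sup (fun p => p.1 + p.2) := Finset.le_sup (f := fun p : ℕ × ℕ => p.1 + p.2) hp
  have := hgb p.1 (by omega) p.2 (by omega)
  rw [neg_sub]
  exact this

theorem seminorm_radial_mul_le {E : Type*} [NormedAddCommGroup E] [InnerProductSpace ℝ E]
    (f : 𝓢(E, ℂ)) (N m : ℕ) : ∃ C : ℝ, 0 < C ∧ ∀ (w : ℝ → ℂ) (ε : ℝ), 0 ≤ ε → ContDiff ℝ ∞ w →
      (∀ i ≤ N, ∀ t, ‖iteratedDeriv i w t‖ ≤ ε * (1 + |t|) ^ m) →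
      ∀ g : 𝓢(E, ℂ), (∀ x, g x = w (‖x‖ ^ 2) * f x) →
      ∀ k ≤ N, ∀ n ≤ N, SchwartzMap.seminorm ℝ k n g ≤ C * ε := by
  have hT : (fun x : E => ‖x‖ ^ 2).HasTemperateGrowth := by fun_prop
  obtain ⟨K, C₀, hC₀, hK⟩ := hT.norm_iteratedFDeriv_le_uniform N
  -- bound on derivatives of the composition
  set D : ℝ := C₀ + 1
  set A : ℕ := N + 2 * m + K * N
  set Q : ℝ := 2 ^ A * ((Finset.Iic (A, N)).sup fun m => SchwartzMap.seminorm ℝ m.1 m.2) f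
  have hQ : 0 ≤ Q := by positivity
  refine ⟨∑ n ∈ Finset.range (N+1), ∑ i ∈ Finset.range (n + 1), (n.choose i : ℝ) * (i.factorial * D ^ i) * Q + 1,
    by positivity, ?_⟩
  intro w ε hε hw hb g hg k hk n hn
  have hcomp : ∀ i ≤ N, ∀ x : E, ‖iteratedFDeriv ℝ i (fun x : E => w (‖x‖ ^ 2)) x‖ ≤
      ε * (i.factorial * D ^ i) * (1 + ‖x‖) ^ (2 * m + K * N) := by
    intro i hi x
    have := norm_iteratedFDeriv_comp_le (n := i) (N := ∞) hw hT.1 (mod_cast le_top) x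
      (C := ε * (1 + ‖x‖) ^ (2 * m)) (D := D * (1 + ‖x‖) ^ K) ?_ ?_
    · refine this.trans ?_
      rw [mul_pow, ← pow_mul, pow_add]
      have : (1 + ‖x‖) ^ (K * i) ≤ (1 + ‖x‖) ^ (K * N) := 
        pow_le_pow_right₀ (by linarith [norm_nonneg x]) (Nat.mul_le_mul_left _ hi)
      calc _ = ε * (i.factorial * D ^ i) * (1 + ‖x‖) ^ (2 * m) * (1 + ‖x‖) ^ (K * i) := by ring
        _ ≤ ε * (i.factorial * D ^ i) * (1 + ‖x‖) ^ (2 * m) * (1 + ‖x‖) ^ (K * N) := by gcongr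
        _ = _ := by ring
    · intro j hj
      rw [norm_iteratedFDeriv_eq_norm_iteratedDeriv]
      refine (hb j (hj.trans hi) _).trans ?_
      rw [pow_mul, abs_of_nonneg (by positivity)]
      gcongr
      nlinarith [norm_nonneg x]
    · intro j hj hji
      refine (hK j (hji.trans hi) x).trans ?_
      calc C₀ * (1 + ‖x‖) ^ K ≤ D * (1 + ‖x‖) ^ K := by gcongr; simp [D]
        _ ≤ _ := by
          refine le_self_pow₀ ?_ (by omega)
          exact one_le_mul_of_one_le_of_one_le (by simp [D, hC₀]) (one_le_pow₀ (by simp))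
  refine SchwartzMap.seminorm_le_bound ℝ k n g (by positivity) ?_
  intro x
  have hge : (g : E → ℂ) = fun x => (fun x : E => w (‖x‖ ^ 2)) x * f x := funext hg
  have hW : ContDiff ℝ ∞ (fun x : E => w (‖x‖ ^ 2)) := hw.comp hT.1
  have hl := norm_iteratedFDeriv_mul_le (n := n) (N := ∞) hW (f.smooth ⊤) x (mod_cast le_top)
  rw [hge]
  calc ‖x‖ ^ k * _ ≤ (1 + ‖x‖) ^ N * ∑ i ∈ Finset.range (n + 1),
      (n.choose i : ℝ) * ‖iteratedFDeriv ℝ i (fun x : E => w (‖x‖ ^ 2)) x‖ * ‖iteratedFDeriv ℝ (n - i) f x‖ := by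
        gcongr
        calc ‖x‖ ^ k ≤ (1 + ‖x‖) ^ k := by gcongr; linarith
          _ ≤ _ := pow_le_pow_right₀ (by linarith [norm_nonneg x]) hk
    _ = ∑ i ∈ Finset.range (n + 1),
      (n.choose i : ℝ) * ‖iteratedFDeriv ℝ i (fun x : E => w (‖x‖ ^ 2)) x‖ * ((1 + ‖x‖) ^ N * ‖iteratedFDeriv ℝ (n - i) f x‖) := by
        rw [Finset.mul_sum]; exact Finset.sum_congr rfl fun i _ => by ring
    _ ≤ ∑ i ∈ Finset.range (n + 1), (n.choose i : ℝ) * (i.factorial * D ^ i) * Q * ε := by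
        refine Finset.sum_le_sum fun i hi => ?_
        have hin : i ≤ n := by simpa [Nat.lt_succ_iff] using hi
        have h1 := hcomp i (hin.trans hn) x
        have h2 : (1 + ‖x‖) ^ A * ‖iteratedFDeriv ℝ (n - i) f x‖ ≤ Q :=
          SchwartzMap.one_add_le_sup_seminorm_apply (𝕜 := ℝ) (m := (A, N)) (k := A) (n := n - i) le_rfl (by simp; omega) f x
        calc _ ≤ (n.choose i : ℝ) * (ε * (i.factorial * D ^ i) * (1 + ‖x‖) ^ (2 * m + K * N)) * ((1 + ‖x‖) ^ N * ‖iteratedFDeriv ℝ (n - i) f x‖) := by gcongr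
          _ = (n.choose i : ℝ) * (i.factorial * D ^ i) * ε * ((1 + ‖x‖) ^ A * ‖iteratedFDeriv ℝ (n - i) f x‖) := by
            simp only [A]; ring
          _ ≤ (n.choose i : ℝ) * (i.factorial * D ^ i) * ε * Q := by gcongr
          _ = _ := by ring
    _ = (∑ i ∈ Finset.range (n + 1), (n.choose i : ℝ) * (i.factorial * D ^ i) * Q) * ε := by rw [Finset.sum_mul]
    _ ≤ _ := by
        gcongr
        refine le_trans ?_ (le_add_of_nonneg_right zero_le_one)
        exact Finset.single_le_sum (f := fun n => ∑ i ∈ Finset.range (n + 1), (n.choose i : ℝ) * (i.factorial * D ^ i) * Q)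
          (fun j _ => by positivity) (by simp; omega)

theorem mem_closure_of_radial_mul {E : Type*} [NormedAddCommGroup E] [InnerProductSpace ℝ E]
    (S : Set 𝓢(E, ℂ)) (f h : 𝓢(E, ℂ))
    (H : ∀ N : ℕ, ∃ m : ℕ, ∀ ε : ℝ, 0 < ε → ∃ w : ℝ → ℂ, ContDiff ℝ ∞ w ∧
      (∀ i ≤ N, ∀ t, ‖iteratedDeriv i w t‖ ≤ ε * (1 + |t|) ^ m) ∧
      ∃ g ∈ S, ∀ x, h x - g x = w (‖x‖ ^ 2) * f x) : h ∈ closure S := by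
  refine mem_closure_of_seminorm S h fun N ε hε => ?_
  obtain ⟨m, hm⟩ := H N
  obtain ⟨C, hC, hCb⟩ := seminorm_radial_mul_le f N m
  obtain ⟨w, hw, hb, g, hg, hgx⟩ := hm (ε / C) (by positivity)
  refine ⟨g, hg, fun k hk n hn => ?_⟩
  have := hCb w (ε / C) (by positivity) hw hb (h - g) (by simpa using hgx) k hk n hn
  rwa [mul_div_cancel₀ _ hC.ne'] at this

theorem iteratedDeriv_cexp_mul (a : ℂ) (n : ℕ) :
    iteratedDeriv n (fun t : ℝ => Complex.exp (a * t)) = fun t : ℝ => a ^ n * Complex.exp (a * t) := by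
  induction n with
  | zero => simp
  | succ n ih =>
    rw [iteratedDeriv_succ, ih]
    funext t
    have h : HasDerivAt (fun t : ℝ => Complex.exp (a * t)) (Complex.exp (a * t) * (a * 1)) t :=
      ((Complex.ofRealCLM.hasDerivAt (x := t)).const_mul a).cexp
    rw [(h.const_mul (a ^ n)).deriv]
    ring

theorem contDiff_cexp_mul (a : ℂ) : ContDiff ℝ ∞ (fun t : ℝ => Complex.exp (a * t)) :=
  (contDiff_const.mul Complex.ofRealCLM.contDiff).cexp

/-- Trigonometric polynomials with frequencies in `A`. -/
def trigPoly (A : Set ℝ) : Submodule ℂ (ℝ → ℂ) :=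
  Submodule.span ℂ ((fun s : ℝ => fun t : ℝ => Complex.exp ((Complex.I * s) * t)) '' A)

theorem trigPoly_contDiff {A : Set ℝ} {q : ℝ → ℂ} (hq : q ∈ trigPoly A) : ContDiff ℝ ∞ q := by
  induction hq using Submodule.span_induction with
  | mem x h => obtain ⟨s, -, rfl⟩ := h; exact contDiff_cexp_mul _
  | zero => exact contDiff_const
  | add x y _ _ hx hy => exact hx.add hy
  | smul a x _ hx => exact contDiff_const.smul hx

theorem exists_trig_base (k : ℝ → ℂ) (hk : Continuous k) (hc : HasCompactSupport k) (ε : ℝ)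
    (hε : 0 < ε) : ∃ q ∈ trigPoly Set.univ, ∀ t, ‖k t - q t‖ ≤ ε * (1 + |t|) := by
  obtain ⟨B, hB⟩ := hc.exists_bound_of_continuous hk
  obtain ⟨R, hR⟩ := hc.isCompact.isBounded.subset_closedBall (0 : ℝ)
  have hB0 : 0 ≤ B := (norm_nonneg _).trans (hB 0)
  obtain ⟨A, hA1, hA2, hA3⟩ : ∃ A : ℝ, R < A ∧ (2 * B + ε) / ε ≤ A ∧ 0 < A :=
    ⟨max (R + 1) (max ((2 * B + ε) / ε) 1), lt_of_lt_of_le (by linarith) (le_max_left _ _),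
      (le_max_left _ _).trans (le_max_right _ _),
      lt_of_lt_of_le one_pos ((le_max_right _ _).trans (le_max_right _ _))⟩
  have hz : ∀ t, A ≤ |t| → k t = 0 := by
    intro t ht
    by_contra h
    have := hR (subset_closure (Function.mem_support.2 h))
    simp at this
    linarith
  have : Fact (0 < 2 * A) := ⟨by positivity⟩
  let F : C(AddCircle (2 * A), ℂ) := ⟨AddCircle.liftIco (2 * A) (-A) k,
    AddCircle.liftIco_continuous (by
      rw [hz _ (by rw [abs_neg, abs_of_pos hA3]), hz]
      rw [abs_of_pos (by linarith)]; linarith) hk.continuousOn⟩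
  have hF : F ∈ closure (Submodule.span ℂ (Set.range <| @fourier (2 * A)) : Set C(AddCircle (2 * A), ℂ)) := by
    rw [← Submodule.topologicalClosure_coe, span_fourier_closure_eq_top]; trivial
  obtain ⟨q0, hq0, hd⟩ := Metric.mem_closure_iff.1 hF ε hε
  rw [dist_eq_norm] at hd
  have hFn : ‖F‖ ≤ B := by
    rw [ContinuousMap.norm_le _ hB0]
    intro x
    exact hB _
  have hq0n : ‖q0‖ ≤ B + ε := by
    calc ‖q0‖ = ‖F - (F - q0)‖ := by simp
      _ ≤ ‖F‖ + ‖F - q0‖ := norm_sub_le _ _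
      _ ≤ _ := by linarith
  refine ⟨fun t => q0 (t : AddCircle (2 * A)), ?_, ?_⟩
  · clear hd hq0n
    induction hq0 using Submodule.span_induction with
    | mem x h =>
      obtain ⟨n, rfl⟩ := h
      refine Submodule.subset_span ⟨2 * Real.pi * n / (2 * A), trivial, ?_⟩
      funext t
      simp only [fourier_coe_apply]
      congr 1
      push_cast
      ring
    | zero => exact Submodule.zero_mem _
    | add x y _ _ hx hy => exact Submodule.add_mem _ hx hy
    | smul a x _ hx => exact Submodule.smul_mem _ a hx
  · intro t
    by_cases ht : t ∈ Set.Ico (-A) (-A + 2 * A)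
    · have h1 : F (t : AddCircle (2 * A)) = k t := AddCircle.liftIco_coe_apply ht
      rw [← h1]
      have h2 := (F - q0).norm_coe_le_norm t
      simp only [ContinuousMap.sub_apply] at h2
      nlinarith [abs_nonneg t]
    · have hAt : A ≤ |t| := by
        by_contra hlt
        push Not at hlt
        rw [abs_lt] at hlt
        exact ht ⟨hlt.1.le, by linarith [hlt.2]⟩
      rw [hz t hAt, zero_sub, norm_neg]
      have h2 := q0.norm_coe_le_norm t
      rw [div_le_iff₀ hε] at hA2
      nlinarith

theorem trig_swap {q : ℝ → ℂ} (hq : q ∈ trigPoly Set.univ) : ∀ ε : ℝ, 0 < ε →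
    ∃ q' ∈ trigPoly {0}ᶜ, ∀ i t, ‖iteratedDeriv i (q - q') t‖ ≤ ε * (1 + |t|) := by
  induction hq using Submodule.span_induction with
  | mem x h =>
    obtain ⟨s, -, rfl⟩ := h
    intro ε hε
    by_cases hs : s = 0
    · subst hs
      set σ := min ε 1
      have hσ : 0 < σ := lt_min hε one_pos
      refine ⟨_, Submodule.subset_span ⟨σ, by simpa using hσ.ne', rfl⟩, ?_⟩
      intro i t
      rcases i with _ | i
      · simp only [iteratedDeriv_zero, Pi.sub_apply]
        have := Real.norm_exp_I_mul_ofReal_sub_one_le (x := σ * t)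
        push_cast at this
        simp only [Complex.ofReal_zero, mul_zero, zero_mul, Complex.exp_zero]
        rw [norm_sub_rev, mul_assoc]
        refine this.trans ?_
        rw [Real.norm_eq_abs, abs_mul, abs_of_pos hσ]
        nlinarith [min_le_left ε 1, abs_nonneg t]
      · rw [iteratedDeriv_sub ((contDiff_cexp_mul _).of_le (mod_cast le_top)).contDiffAt
          ((contDiff_cexp_mul _).of_le (mod_cast le_top)).contDiffAt, iteratedDeriv_cexp_mul,
          iteratedDeriv_cexp_mul]
        have e : ‖Complex.exp (Complex.I * σ * t)‖ = 1 := by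
          rw [mul_assoc, mul_comm, ← Complex.ofReal_mul, Complex.norm_exp_ofReal_mul_I]
        simp only [Complex.ofReal_zero, mul_zero, ne_eq, Nat.add_eq_zero_iff, one_ne_zero, and_false,
          not_false_eq_true, zero_pow, zero_mul, zero_sub, norm_neg, norm_mul, norm_pow, e,
          Complex.norm_I, one_mul, mul_one, Complex.norm_real, Real.norm_eq_abs, abs_of_pos hσ]
        have h1 : σ ^ (i + 1) ≤ σ := pow_le_of_le_one hσ.le (min_le_right _ _) (by omega)
        nlinarith [min_le_left ε 1, abs_nonneg t]
    · refine ⟨_, Submodule.subset_span ⟨s, hs, rfl⟩, ?_⟩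
      intro i t
      simp
      positivity
  | zero =>
    intro ε hε
    refine ⟨0, Submodule.zero_mem _, fun i t => ?_⟩
    simp
    positivity
  | add x y hx' hy' hx hy =>
    intro ε hε
    obtain ⟨a, ha, hab⟩ := hx (ε / 2) (by positivity)
    obtain ⟨b, hb, hbb⟩ := hy (ε / 2) (by positivity)
    refine ⟨a + b, Submodule.add_mem _ ha hb, fun i t => ?_⟩
    have e : x + y - (a + b) = (x - a) + (y - b) := by abel
    have h1 : ContDiff ℝ ∞ (x - a) := (trigPoly_contDiff hx').sub (trigPoly_contDiff ha)
    have h2 : ContDiff ℝ ∞ (y - b) := (trigPoly_contDiff hy').sub (trigPoly_contDiff hb)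
    rw [e, iteratedDeriv_add (h1.of_le (mod_cast le_top)).contDiffAt (h2.of_le (mod_cast le_top)).contDiffAt]
    refine (norm_add_le _ _).trans ?_
    linarith [hab i t, hbb i t]
  | smul c x hx' hx =>
    intro ε hε
    obtain ⟨a, ha, hab⟩ := hx (ε / (‖c‖ + 1)) (by positivity)
    refine ⟨c • a, Submodule.smul_mem _ c ha, fun i t => ?_⟩
    have h1 : ContDiff ℝ ∞ (x - a) := (trigPoly_contDiff hx').sub (trigPoly_contDiff ha)
    rw [← smul_sub, iteratedDeriv_const_smul (h1.of_le (mod_cast le_top)).contDiffAt, norm_smul]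
    calc ‖c‖ * _ ≤ (‖c‖ + 1) * (ε / (‖c‖ + 1) * (1 + |t|)) := by
          gcongr
          · linarith
          · exact hab i t
      _ = _ := by field_simp

theorem trig_primitive {q : ℝ → ℂ} (hq : q ∈ trigPoly {0}ᶜ) :
    ∃ Q ∈ trigPoly Set.univ, deriv Q = q := by
  induction hq using Submodule.span_induction with
  | mem x h =>
    obtain ⟨s, hs, rfl⟩ := h
    refine ⟨(Complex.I * s)⁻¹ • fun t : ℝ => Complex.exp ((Complex.I * s) * t),
      Submodule.smul_mem _ _ (Submodule.subset_span ⟨s, trivial, rfl⟩), ?_⟩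
    have := iteratedDeriv_cexp_mul (Complex.I * s) 1
    rw [iteratedDeriv_one] at this
    funext t
    rw [deriv_const_smul _ ((contDiff_cexp_mul _).differentiable (by simp) _), this]
    have hs' : (Complex.I * s) ≠ 0 := by simpa using hs
    simp only [smul_eq_mul, pow_one]
    rw [inv_mul_cancel_left₀ hs']
  | zero => exact ⟨0, Submodule.zero_mem _, by funext t; simp⟩
  | add x y _ _ hx hy =>
    obtain ⟨a, ha, rfl⟩ := hx
    obtain ⟨b, hb, rfl⟩ := hy
    refine ⟨a + b, Submodule.add_mem _ ha hb, ?_⟩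
    funext t
    exact deriv_add ((trigPoly_contDiff ha).differentiable (by simp) _) ((trigPoly_contDiff hb).differentiable (by simp) _)
  | smul c x _ hx =>
    obtain ⟨a, ha, rfl⟩ := hx
    refine ⟨c • a, Submodule.smul_mem _ c ha, ?_⟩
    funext t
    exact deriv_const_smul _ ((trigPoly_contDiff ha).differentiable (by simp) _)

theorem exists_trig (N : ℕ) : ∀ (k : ℝ → ℂ), ContDiff ℝ ∞ k → HasCompactSupport k →
    ∀ ε : ℝ, 0 < ε → ∃ q ∈ trigPoly Set.univ, ∀ i ≤ N, ∀ t,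
      ‖iteratedDeriv i (k - q) t‖ ≤ ε * (1 + |t|) ^ (N + 1) := by
  induction N with
  | zero =>
    intro k hk hc ε hε
    obtain ⟨q, hq, h⟩ := exists_trig_base k hk.continuous hc ε hε
    refine ⟨q, hq, fun i hi t => ?_⟩
    obtain rfl : i = 0 := by omega
    simpa using h t
  | succ N ih =>
    intro k hk hc ε hε
    obtain ⟨q, hq, h⟩ := ih (deriv k) ((contDiff_infty_iff_deriv.1 hk).2) hc.deriv (ε / 2) (by positivity)
    obtain ⟨q', hq', h'⟩ := trig_swap hq (ε / 2) (by positivity)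
    obtain ⟨Q, hQ, hQd⟩ := trig_primitive hq'
    have hQs := trigPoly_contDiff hQ
    have hqs := trigPoly_contDiff hq
    have hqs' := trigPoly_contDiff hq'
    have hk' : ContDiff ℝ ∞ (deriv k) := (contDiff_infty_iff_deriv.1 hk).2
    have hone : (fun _ : ℝ => (1 : ℂ)) ∈ trigPoly Set.univ :=
      Submodule.subset_span ⟨0, trivial, by simp⟩
    set c := k 0 - Q 0 with hc
    refine ⟨Q + c • (fun _ => 1), Submodule.add_mem _ hQ (Submodule.smul_mem _ _ hone), ?_⟩
    set w := k - (Q + c • (fun _ => 1)) with hw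
    have hwe : w = fun t => k t - Q t - c := by funext t; simp [hw]; ring
    have hws : ContDiff ℝ ∞ w := by rw [hwe]; exact (hk.sub hQs).sub contDiff_const
    have hwd : deriv w = (deriv k - q) + (q - q') := by
      funext t
      rw [hwe]
      rw [deriv_sub_const, deriv_fun_sub (hk.differentiable (by simp) _) (hQs.differentiable (by simp) _), hQd]
      simp
    have hbd : ∀ i ≤ N, ∀ t, ‖iteratedDeriv i (deriv w) t‖ ≤ ε * (1 + |t|) ^ (N + 1) := by
      intro i hi t
      have h1 : ContDiff ℝ ∞ (deriv k - q) := hk'.sub hqs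
      have h2 : ContDiff ℝ ∞ (q - q') := hqs.sub hqs'
      rw [hwd, iteratedDeriv_add (h1.of_le (mod_cast le_top)).contDiffAt (h2.of_le (mod_cast le_top)).contDiffAt]
      refine (norm_add_le _ _).trans ?_
      have e1 := h i hi t
      have e2 := h' i t
      have e3 : (1 + |t|) ≤ (1 + |t|) ^ (N + 1) := le_self_pow₀ (by linarith [abs_nonneg t]) (by omega)
      nlinarith
    intro i hi t
    rcases i with _ | i
    · rw [iteratedDeriv_zero]
      have hw0 : w 0 = 0 := by rw [hwe]; simp [hc]
      have := (convex_closedBall (0 : ℝ) |t|).norm_image_sub_le_of_norm_deriv_le (f := w) (x := 0) (y := t)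
        (C := ε * (1 + |t|) ^ (N + 1))
        (fun x _ => hws.differentiable (by simp) x) ?_ (by simp) (by simp)
      · rw [hw0, sub_zero, sub_zero, Real.norm_eq_abs] at this
        refine this.trans ?_
        rw [pow_succ _ (N + 1), ← mul_assoc]
        gcongr
        linarith
      · intro x hx
        have := hbd 0 (by omega) x
        rw [iteratedDeriv_zero] at this
        refine this.trans ?_
        have : |x| ≤ |t| := by simpa using hx
        gcongr
    · rw [iteratedDeriv_succ']
      refine (hbd i (by omega) t).trans ?_
      gcongr ?_ * ?_
      exact pow_le_pow_right₀ (by linarith [abs_nonneg t]) (by omega)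

theorem exists_gaussian {E : Type*} [NormedAddCommGroup E] [InnerProductSpace ℝ E]
    (τ : ℂ) (hτ : 0 < τ.im) : ∃ g : 𝓢(E, ℂ), ∀ x, g x =
      Complex.exp (Real.pi * Complex.I * τ * (‖x‖ : ℂ) ^ 2) := by
  have hT : (fun x : E => ‖x‖ ^ 2).HasTemperateGrowth := by fun_prop
  set a : ℂ := Real.pi * Complex.I * τ with ha
  have he : (fun x : E => Complex.exp (a * (‖x‖ : ℂ) ^ 2)) =
      (fun t : ℝ => Complex.exp (a * t)) ∘ (fun x : E => ‖x‖ ^ 2) := by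
    funext x; simp
  set c : ℝ := Real.pi * τ.im with hc
  have hcpos : 0 < c := by positivity
  have hre : a.re = -c := by simp [ha, hc]
  refine ⟨⟨fun x : E => Complex.exp (a * (‖x‖ : ℂ) ^ 2), ?_, ?_⟩, fun x => rfl⟩
  · rw [he]; exact (contDiff_cexp_mul a).comp hT.1
  · intro k n
    obtain ⟨K, C₀, hC₀, hK⟩ := hT.norm_iteratedFDeriv_le_uniform n
    set D : ℝ := C₀ + 1
    set A : ℕ := k + K * n
    refine ⟨n.factorial * (1 + ‖a‖) ^ n * D ^ n * (2 ^ A * (A.factorial * Real.exp c / c ^ A)), ?_⟩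
    intro x
    have hcomp := norm_iteratedFDeriv_comp_le (n := n) (N := ∞) (contDiff_cexp_mul a) hT.1
      (mod_cast le_top) x
      (C := (1 + ‖a‖) ^ n * Real.exp (-(c * ‖x‖ ^ 2))) (D := D * (1 + ‖x‖) ^ K) ?_ ?_
    · rw [he]
      have h1 : (1 + ‖x‖) ^ A ≤ 2 ^ A * (1 + ‖x‖ ^ 2) ^ A := by
        rw [← mul_pow]
        gcongr
        nlinarith [sq_nonneg (‖x‖ - 1)]
      have h2 : (1 + ‖x‖ ^ 2) ^ A ≤ (A.factorial * Real.exp c / c ^ A) * Real.exp (c * ‖x‖ ^ 2) := by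
        have := Real.pow_div_factorial_le_exp (c * (1 + ‖x‖ ^ 2)) (by positivity) A
        rw [mul_add, mul_one, Real.exp_add, ← mul_one_add, div_le_iff₀ (by positivity), mul_pow] at this
        rw [div_mul_eq_mul_div, le_div_iff₀ (by positivity)]
        linarith
      have h3 : ‖x‖ ^ k ≤ (1 + ‖x‖) ^ k := by gcongr; linarith
      calc _ ≤ (1 + ‖x‖) ^ k * (n.factorial * ((1 + ‖a‖) ^ n * Real.exp (-(c * ‖x‖ ^ 2))) * (D * (1 + ‖x‖) ^ K) ^ n) := by
            gcongr
        _ = n.factorial * (1 + ‖a‖) ^ n * D ^ n * ((1 + ‖x‖) ^ A * Real.exp (-(c * ‖x‖ ^ 2))) := by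
            simp only [A]; ring
        _ ≤ n.factorial * (1 + ‖a‖) ^ n * D ^ n * (2 ^ A * ((A.factorial * Real.exp c / c ^ A) * Real.exp (c * ‖x‖ ^ 2)) * Real.exp (-(c * ‖x‖ ^ 2))) := by
            gcongr
            exact h1.trans (by gcongr)
        _ = _ := by
            rw [Real.exp_neg]
            field_simp
    · intro i hi
      rw [norm_iteratedFDeriv_eq_norm_iteratedDeriv, iteratedDeriv_cexp_mul]
      simp only [norm_mul, norm_pow, Complex.norm_exp]
      rw [Complex.re_mul_ofReal, hre, neg_mul]
      gcongr
      calc ‖a‖ ^ i ≤ (1 + ‖a‖) ^ i := by gcongr; linarith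
        _ ≤ _ := pow_le_pow_right₀ (by linarith [norm_nonneg a]) hi
    · intro j hj hji
      refine (hK j hji x).trans ?_
      calc C₀ * (1 + ‖x‖) ^ K ≤ D * (1 + ‖x‖) ^ K := by gcongr; simp [D]
        _ ≤ _ := by
          refine le_self_pow₀ ?_ (by omega)
          exact one_le_mul_of_one_le_of_one_le (by simp [D, hC₀]) (one_le_pow₀ (by simp))

/-- A fixed smooth cutoff on the line. -/
def cutoffBump : ContDiffBump (0 : ℝ) := ⟨1, 2, one_pos, one_lt_two⟩

/-- The cutoff, complex valued. -/
def cutoff (t : ℝ) : ℂ := (cutoffBump t : ℂ)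

theorem cutoff_contDiff : ContDiff ℝ ∞ cutoff :=
  Complex.ofRealCLM.contDiff.comp cutoffBump.contDiff

theorem cutoff_hasCompactSupport : HasCompactSupport cutoff :=
  cutoffBump.hasCompactSupport.comp_left (g := fun x : ℝ => (x : ℂ)) (by simp)

theorem cutoff_bound (N : ℕ) : ∃ C : ℝ, 0 < C ∧ ∀ δ : ℝ, 0 < δ → δ ≤ 1 → ∀ i ≤ N, ∀ t : ℝ,
    ‖iteratedDeriv i (fun t : ℝ => 1 - cutoff (δ * t)) t‖ ≤ δ * C * (1 + |t|) ^ 1 := by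
  have h1 : ∀ i : ℕ, ∃ C : ℝ, ∀ t, ‖iteratedDeriv i cutoff t‖ ≤ C := by
    intro i
    have hc : HasCompactSupport (iteratedDeriv i cutoff) := by
      have := cutoff_hasCompactSupport.iteratedFDeriv (𝕜 := ℝ) i
      rw [iteratedDeriv_eq_equiv_comp]
      exact this.comp_left (map_zero _)
    exact hc.exists_bound_of_continuous (cutoff_contDiff.continuous_iteratedDeriv i (mod_cast le_top))
  choose C hC using h1
  have hC0 : ∀ i, 0 ≤ C i := fun i => (norm_nonneg _).trans (hC i 0)
  refine ⟨∑ i ∈ Finset.range (N + 1), C i + 1, by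
    have := Finset.sum_nonneg fun j (_ : j ∈ Finset.range (N + 1)) => hC0 j
    linarith, ?_⟩
  intro δ hδ hδ1 i hi t
  have hle : C i ≤ ∑ i ∈ Finset.range (N + 1), C i :=
    Finset.single_le_sum (fun j _ => hC0 j) (by simp; omega)
  have hS : 0 ≤ ∑ i ∈ Finset.range (N + 1), C i := Finset.sum_nonneg fun j _ => hC0 j
  set S := ∑ i ∈ Finset.range (N + 1), C i
  rw [pow_one]
  rcases i with _ | i
  · rw [iteratedDeriv_zero]
    have hre : 1 - cutoff (δ * t) = ((1 - cutoffBump (δ * t) : ℝ) : ℂ) := by simp [cutoff]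
    rw [hre, Complex.norm_real, Real.norm_eq_abs]
    by_cases ht : |δ * t| ≤ 1
    · rw [cutoffBump.one_of_mem_closedBall (by simpa [cutoffBump] using ht)]
      simp
      positivity
    · rw [abs_of_nonneg (by linarith [cutoffBump.le_one (x := δ * t)])]
      have := cutoffBump.nonneg (x := δ * t)
      rw [abs_mul, abs_of_pos hδ] at ht
      push Not at ht
      have h3 : 0 ≤ δ * S * (1 + |t|) := by positivity
      nlinarith
  · have h2 : iteratedDeriv (i + 1) (fun t : ℝ => 1 - cutoff (δ * t)) t =
        -(δ ^ (i + 1) • iteratedDeriv (i + 1) cutoff (δ * t)) := by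
      rw [iteratedDeriv_const_sub (by omega)]
      rw [iteratedDeriv_neg]
      have h5 : ContDiff ℝ ((i + 1 : ℕ) : WithTop ℕ∞) cutoff := cutoff_contDiff.of_le (mod_cast le_top)
      rw [iteratedDeriv_comp_const_smul h5]
    rw [h2, norm_neg, norm_smul, Real.norm_eq_abs, abs_of_pos (by positivity)]
    have h3 : δ ^ (i + 1) ≤ δ := pow_le_of_le_one hδ.le hδ1 (by omega)
    calc _ ≤ δ * C (i + 1) := by gcongr; exact hC _ _
      _ ≤ δ * (S + 1) := by gcongr; linarith
      _ ≤ _ := le_mul_of_one_le_right (by positivity) (by simp)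

theorem hasCompactSupport_radial {E : Type*} [NormedAddCommGroup E] [ProperSpace E] {p : ℝ → ℂ}
    (hp : HasCompactSupport p) : HasCompactSupport (fun x : E => p (‖x‖ ^ 2)) := by
  obtain ⟨R, hR⟩ := hp.isCompact.isBounded.subset_closedBall (0 : ℝ)
  refine HasCompactSupport.intro (isCompact_closedBall (0 : E) (R + 1)) fun x hx => ?_
  by_contra h
  have := hR (subset_closure (Function.mem_support.2 h))
  simp at this hx
  nlinarith [norm_nonneg x, sq_nonneg (‖x‖ - 1)]

theorem cutoff_scale_hasCompactSupport {δ : ℝ} (hδ : 0 < δ) :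
    HasCompactSupport (fun t => cutoff (δ * t)) := 
  cutoff_hasCompactSupport.comp_homeomorph (Homeomorph.mulLeft₀ δ hδ.ne')

theorem mem_closure_cutoff {E : Type*} [NormedAddCommGroup E] [InnerProductSpace ℝ E] [ProperSpace E]
    (f : 𝓢(E, ℂ)) : f ∈ closure {g : 𝓢(E, ℂ) | ∃ δ : ℝ, 0 < δ ∧ ∀ x, g x =
      cutoff (δ * ‖x‖ ^ 2) * f x} := by
  refine mem_closure_of_radial_mul _ f f fun N => ?_
  obtain ⟨C, hC, hb⟩ := cutoff_bound N
  refine ⟨1, fun ε hε => ?_⟩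
  set δ := min 1 (ε / C)
  have hδ : 0 < δ := lt_min one_pos (by positivity)
  have hs : ContDiff ℝ ∞ (fun t => cutoff (δ * t)) := cutoff_contDiff.comp (contDiff_const.mul contDiff_id)
  refine ⟨fun t => 1 - cutoff (δ * t), contDiff_const.sub hs, ?_, ?_⟩
  · intro i hi t
    refine (hb δ hδ (min_le_left _ _) i hi t).trans ?_
    gcongr
    calc δ * C ≤ ε / C * C := by gcongr; exact min_le_right _ _
      _ = ε := by field_simp
  · have hc : HasCompactSupport (fun x : E => cutoff (δ * ‖x‖ ^ 2) * f x) :=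
      (hasCompactSupport_radial (E := E) (cutoff_scale_hasCompactSupport hδ)).mul_right
    have hT : (fun x : E => ‖x‖ ^ 2).HasTemperateGrowth := by fun_prop
    refine ⟨hc.toSchwartzMap ((hs.comp hT.1).mul (f.smooth ⊤)), ⟨δ, hδ, fun x => rfl⟩, fun x => ?_⟩
    simp
    ring

section span
variable {E : Type*} [NormedAddCommGroup E] [InnerProductSpace ℝ E]

/-- Gaussians with imaginary part `y`. -/
def gaussSet (E : Type*) [NormedAddCommGroup E] [InnerProductSpace ℝ E] (y : ℝ) : Set 𝓢(E, ℂ) :=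
  {g : 𝓢(E, ℂ) | ∃ τ : ℂ, τ.im = y ∧ ∀ x : E,
        g x = Complex.exp (Real.pi * Complex.I * τ * (‖x‖ : ℂ) ^ 2)}

theorem trig_mul_mem {y : ℝ} (hy : 0 < y) {q : ℝ → ℂ} (hq : q ∈ trigPoly Set.univ) :
    ∃ g ∈ Submodule.span ℂ (gaussSet E y), ∀ x : E, g x = q (‖x‖ ^ 2) *
      Complex.exp (Real.pi * Complex.I * (Complex.I * y) * (‖x‖ : ℂ) ^ 2) := by
  induction hq using Submodule.span_induction with
  | mem x h =>
    obtain ⟨s, -, rfl⟩ := h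
    set τ : ℂ := s / Real.pi + Complex.I * y with hτ
    have him : τ.im = y := by
      have : τ = ((s / Real.pi : ℝ) : ℂ) + Complex.I * y := by rw [hτ]; push_cast; rfl
      rw [this, Complex.add_im, Complex.ofReal_im]; simp
    obtain ⟨g, hg⟩ := exists_gaussian (E := E) τ (by rw [him]; exact hy)
    refine ⟨g, Submodule.subset_span ⟨τ, him, hg⟩, fun x => ?_⟩
    rw [hg, ← Complex.exp_add]
    congr 1
    have : (Real.pi : ℂ) ≠ 0 := by exact_mod_cast Real.pi_ne_zero
    rw [hτ]
    push_cast
    field_simp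
  | zero => exact ⟨0, Submodule.zero_mem _, by simp⟩
  | add a b _ _ ha hb =>
    obtain ⟨u, hu, hu'⟩ := ha
    obtain ⟨v, hv, hv'⟩ := hb
    refine ⟨u + v, Submodule.add_mem _ hu hv, fun x => ?_⟩
    simp [hu', hv']
    ring
  | smul c a _ ha =>
    obtain ⟨u, hu, hu'⟩ := ha
    refine ⟨c • u, Submodule.smul_mem _ c hu, fun x => ?_⟩
    simp [hu']
    ring

theorem mem_closure_of_compact {y : ℝ} (hy : 0 < y) (h : 𝓢(E, ℂ)) (k : ℝ → ℂ)
    (hk : ContDiff ℝ ∞ k) (hc : HasCompactSupport k) (hx : ∀ x, h x = k (‖x‖ ^ 2)) :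
    h ∈ closure (Submodule.span ℂ (gaussSet E y) : Set 𝓢(E, ℂ)) := by
  obtain ⟨g0, hg0⟩ := exists_gaussian (E := E) (Complex.I * y) (by simpa using hy)
  refine mem_closure_of_radial_mul _ g0 h fun N => ⟨N + 1, fun ε hε => ?_⟩
  have hk' : ContDiff ℝ ∞ (fun t : ℝ => k t * Complex.exp ((Real.pi * y : ℂ) * t)) :=
    hk.mul (contDiff_cexp_mul _)
  obtain ⟨q, hq, hb⟩ := exists_trig N _ hk' hc.mul_right ε hε
  obtain ⟨g, hg, hgx⟩ := trig_mul_mem (E := E) hy hq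
  refine ⟨_, hk'.sub (trigPoly_contDiff hq), hb, g, hg, fun x => ?_⟩
  have h0 : (Real.pi * y : ℂ) * ((‖x‖ ^ 2 : ℝ) : ℂ) +
      Real.pi * Complex.I * (Complex.I * y) * (‖x‖ : ℂ) ^ 2 = 0 := by
    push_cast
    linear_combination (Real.pi * y * (‖x‖ : ℂ) ^ 2) * Complex.I_mul_I
  have h1 := Complex.exp_add ((Real.pi * y : ℂ) * ((‖x‖ ^ 2 : ℝ) : ℂ))
    (Real.pi * Complex.I * (Complex.I * y) * (‖x‖ : ℂ) ^ 2)
  rw [h0, Complex.exp_zero] at h1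
  rw [hgx, hg0, hx]
  linear_combination k (‖x‖ ^ 2) * h1

theorem mem_closure_of_smooth [ProperSpace E] {y : ℝ} (hy : 0 < y) (h : 𝓢(E, ℂ)) (p : ℝ → ℂ)
    (hp : ContDiff ℝ ∞ p) (hx : ∀ x, h x = p (‖x‖ ^ 2)) :
    h ∈ closure (Submodule.span ℂ (gaussSet E y) : Set 𝓢(E, ℂ)) := by
  refine closure_minimal ?_ isClosed_closure (mem_closure_cutoff h)
  rintro g ⟨δ, hδ, hg⟩
  have hs : ContDiff ℝ ∞ (fun t => cutoff (δ * t)) := cutoff_contDiff.comp (contDiff_const.mul contDiff_id)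
  exact mem_closure_of_compact hy g (fun t => cutoff (δ * t) * p t) (hs.mul hp)
    (cutoff_scale_hasCompactSupport hδ).mul_right (fun x => by rw [hg, hx])

end span

theorem exists_cosSqrt : ∃ F : ℂ → ℂ, Differentiable ℂ F ∧ ∀ w, F (w ^ 2) = Complex.cos w := by
  refine ⟨fun z => ∑' n : ℕ, (-1) ^ n * z ^ n / ((2 * n).factorial : ℂ), ?_, ?_⟩
  · intro z
    have hU : IsOpen (Metric.ball (0 : ℂ) (‖z‖ + 1)) := Metric.isOpen_ball
    have := Complex.differentiableOn_tsum_of_summable_norm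
      (F := fun (n : ℕ) (z : ℂ) => (-1) ^ n * z ^ n / ((2 * n).factorial : ℂ))
      (Real.summable_pow_div_factorial (‖z‖ + 1)) (fun i => by fun_prop) hU ?_
    · exact this.differentiableAt (hU.mem_nhds (by simp))
    · intro n w hw
      simp only [mem_ball_zero_iff] at hw
      simp only [norm_div, norm_mul, norm_pow, norm_neg, norm_one, one_pow, one_mul,
        Complex.norm_natCast]
      gcongr
      omega
  · intro w
    rw [← (Complex.hasSum_cos w).tsum_eq]
    simp only [← pow_mul]

section fourier
open scoped FourierTransform RealInnerProductSpace
open MeasureTheory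
variable {d : ℕ}

theorem exists_isometry (x y : EuclideanSpace ℝ (Fin d)) (h : ‖x‖ = ‖y‖) : ∃ A : EuclideanSpace ℝ (Fin d) ≃ₗᵢ[ℝ] EuclideanSpace ℝ (Fin d), A x = y ∧ ∀ z, ‖A z‖ = ‖z‖ :=
  ⟨(ℝ ∙ (x - y))ᗮ.reflection, Submodule.reflection_sub h, fun z => LinearIsometryEquiv.norm_map _ z⟩

theorem isRadial_fourier (f : EuclideanSpace ℝ (Fin d) → ℂ) (hf : IsRadial f) : IsRadial (𝓕 f) := by
  intro x y h
  obtain ⟨A, hA, hn⟩ := exists_isometry x y h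
  have : f ∘ A = f := funext fun z => hf _ _ (hn z)
  rw [← hA, ← Real.fourier_comp_linearIsometry, this]

theorem isRadial_fourierInv (f : EuclideanSpace ℝ (Fin d) → ℂ) (hf : IsRadial f) : IsRadial (𝓕⁻ f) := by
  intro x y h
  obtain ⟨A, hA, hn⟩ := exists_isometry x y h
  have : f ∘ A = f := funext fun z => hf _ _ (hn z)
  rw [← hA, ← Real.fourierInv_comp_linearIsometry, this]

theorem exists_entire (q : EuclideanSpace ℝ (Fin d) → ℂ) (hq : Continuous q) (hc : HasCompactSupport q) (e : EuclideanSpace ℝ (Fin d)) (F : ℂ → ℂ)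
    (hF : Differentiable ℂ F) :
    Differentiable ℂ (fun z : ℂ => ∫ ξ : EuclideanSpace ℝ (Fin d), F (z * ((2 * Real.pi * ⟪ξ, e⟫ : ℝ) : ℂ) ^ 2) * q ξ) := by
  intro z₀
  have hFd : Continuous (deriv F) := (hF.contDiff (n := 1)).continuous_deriv le_rfl
  have hFc : Continuous F := hF.continuous
  set a : EuclideanSpace ℝ (Fin d) → ℂ := fun ξ => ((2 * Real.pi * ⟪ξ, e⟫ : ℝ) : ℂ) ^ 2 with ha
  have hac : Continuous a := by fun_prop
  let F' : ℂ → EuclideanSpace ℝ (Fin d) → ℂ := fun z ξ => deriv F (z * a ξ) * a ξ * q ξ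
  have hcont : Continuous (fun p : ℂ × EuclideanSpace ℝ (Fin d) => F' p.1 p.2) := by fun_prop
  obtain ⟨B, hB⟩ := ((isCompact_closedBall z₀ 1).prod hc.isCompact).exists_bound_of_continuousOn
    hcont.continuousOn
  have key := hasDerivAt_integral_of_dominated_loc_of_deriv_le (μ := (volume : Measure (EuclideanSpace ℝ (Fin d))))
    (F := fun z ξ => F (z * a ξ) * q ξ) (F' := F') (x₀ := z₀)
    (s := Metric.closedBall z₀ 1) (bound := (tsupport q).indicator fun _ => B)
    (Metric.closedBall_mem_nhds z₀ one_pos) ?_ ?_ ?_ ?_ ?_ ?_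
  · exact key.2.differentiableAt
  · exact Filter.Eventually.of_forall fun z => Continuous.aestronglyMeasurable (by fun_prop)
  · exact Continuous.integrable_of_hasCompactSupport (by fun_prop) hc.mul_left
  · exact Continuous.aestronglyMeasurable (by fun_prop)
  · refine Filter.Eventually.of_forall fun ξ z hz => ?_
    by_cases h : ξ ∈ tsupport q
    · rw [Set.indicator_of_mem h]
      exact hB (z, ξ) ⟨hz, h⟩
    · rw [Set.indicator_of_notMem h]
      simp [F', image_eq_zero_of_notMem_tsupport h]
  · exact (integrable_indicator_iff hc.isCompact.measurableSet).2
      (integrableOn_const hc.isCompact.measure_lt_top.ne)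
  · refine Filter.Eventually.of_forall fun ξ z _ => ?_
    have h1 : HasDerivAt (fun z => z * a ξ) (a ξ) z := by simpa using (hasDerivAt_id z).mul_const (a ξ)
    exact (((hF _).hasDerivAt).comp z h1).mul_const (q ξ)

theorem exists_smooth_profile (hd : 1 ≤ d) (q : EuclideanSpace ℝ (Fin d) → ℂ) (hq : Continuous q) (hc : HasCompactSupport q)
    (hr : IsRadial q) : ∃ p : ℝ → ℂ, ContDiff ℝ ∞ p ∧ ∀ x, 𝓕⁻ q x = p (‖x‖ ^ 2) := by
  obtain ⟨F, hF, hFc⟩ := exists_cosSqrt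
  set e : EuclideanSpace ℝ (Fin d) := EuclideanSpace.single ⟨0, hd⟩ 1
  have hen : ‖e‖ = 1 := by simp [e]
  have hH := exists_entire q hq hc e F hF
  set H := (fun z : ℂ => ∫ ξ : EuclideanSpace ℝ (Fin d), F (z * ((2 * Real.pi * ⟪ξ, e⟫ : ℝ) : ℂ) ^ 2) * q ξ) with hHdef
  refine ⟨fun t => H t, ?_, ?_⟩
  · have h1 : ContDiff ℂ ∞ H := hH.contDiff
    exact (h1.restrict_scalars ℝ).comp Complex.ofRealCLM.contDiff
  intro x
  have hrad := isRadial_fourierInv q hr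
  have h1 : 𝓕⁻ q x = 𝓕⁻ q (‖x‖ • e) := hrad _ _ (by rw [norm_smul, hen]; simp)
  have h2 : 𝓕⁻ q x = 𝓕⁻ q (-(‖x‖ • e)) := hrad _ _ (by rw [norm_neg, norm_smul, hen]; simp)
  have hint : ∀ v : EuclideanSpace ℝ (Fin d), Integrable (fun ξ : EuclideanSpace ℝ (Fin d) => Complex.exp ((↑(2 * Real.pi * ⟪ξ, v⟫) * Complex.I)) • q ξ) := by
    intro v
    have hcv : Continuous fun ξ : EuclideanSpace ℝ (Fin d) =>
        Complex.exp ((↑(2 * Real.pi * ⟪ξ, v⟫) * Complex.I)) * q ξ := by fun_prop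
    exact hcv.integrable_of_hasCompactSupport hc.mul_left
  have h3 : 𝓕⁻ q x = (1 / 2 : ℂ) * (𝓕⁻ q (‖x‖ • e) + 𝓕⁻ q (-(‖x‖ • e))) := by
    rw [← h1, ← h2]; ring
  rw [h3, Real.fourierInv_eq', Real.fourierInv_eq', ← integral_add (hint _) (hint _),
    ← integral_const_mul]
  simp only [hHdef]
  congr 1
  funext ξ
  have h4 : (((‖x‖ ^ 2 : ℝ) : ℂ) * ((2 * Real.pi * ⟪ξ, e⟫ : ℝ) : ℂ) ^ 2) =
      ((2 * Real.pi * ⟪ξ, ‖x‖ • e⟫ : ℝ) : ℂ) ^ 2 := by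
    rw [inner_smul_right]; push_cast; ring
  rw [h4, hFc, Complex.cos, inner_neg_right]
  simp only [smul_eq_mul]
  push_cast
  ring_nf

end fourier

open scoped FourierTransform in
theorem mem_closure_of_isRadial {d : ℕ} (hd : 1 ≤ d) {y : ℝ} (hy : 0 < y)
    (f : 𝓢(EuclideanSpace ℝ (Fin d), ℂ)) (hf : IsRadial f) :
    f ∈ closure (Submodule.span ℂ (gaussSet (EuclideanSpace ℝ (Fin d)) y) :
      Set 𝓢(EuclideanSpace ℝ (Fin d), ℂ)) := by
  have h1 := mem_closure_cutoff (𝓕 f)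
  have hcont : Continuous (fun g : 𝓢(EuclideanSpace ℝ (Fin d), ℂ) => 𝓕⁻ g) := by fun_prop
  have h2 := map_mem_closure (t := closure (Submodule.span ℂ (gaussSet (EuclideanSpace ℝ (Fin d)) y) :
      Set 𝓢(EuclideanSpace ℝ (Fin d), ℂ))) hcont h1 ?_
  · rw [closure_closure, FourierTransform.fourierInv_fourier_eq] at h2
    exact h2
  · rintro g ⟨δ, hδ, hg⟩
    have hge : (g : EuclideanSpace ℝ (Fin d) → ℂ) = fun x => cutoff (δ * ‖x‖ ^ 2) * (𝓕 f) x :=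
      funext hg
    have hr : IsRadial (g : EuclideanSpace ℝ (Fin d) → ℂ) := by
      intro a b hab
      rw [hg, hg, hab]
      congr 1
      exact isRadial_fourier f hf a b hab
    have hc : HasCompactSupport (g : EuclideanSpace ℝ (Fin d) → ℂ) := by
      rw [hge]
      exact (hasCompactSupport_radial (cutoff_scale_hasCompactSupport hδ)).mul_right
    obtain ⟨p, hp, hpx⟩ := exists_smooth_profile hd g g.continuous hc hr
    refine mem_closure_of_smooth hy _ p hp fun x => ?_
    rw [← hpx, SchwartzMap.fourierInv_coe]

/-- The complex Gaussians `x ↦ exp(πiτ|x|²)` with `Im τ = y` (for any fixed `y > 0`) span a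
dense subspace of the space of radial Schwartz functions on `ℝ^d`: every radial Schwartz
function lies in the closure of their `ℂ`-linear span in the Schwartz space topology. -/
theorem gaussians_span_dense (d : ℕ) (hd : 1 ≤ d) (y : ℝ) (hy : 0 < y)
    (G : Set (SchwartzMap (EuclideanSpace ℝ (Fin d)) ℂ))
    (hG : G = {g : SchwartzMap (EuclideanSpace ℝ (Fin d)) ℂ | ∃ τ : ℂ, τ.im = y ∧
      ∀ x : EuclideanSpace ℝ (Fin d),
        g x = Complex.exp (Real.pi * Complex.I * τ * (‖x‖ : ℂ) ^ 2)})
    (f : SchwartzMap (EuclideanSpace ℝ (Fin d)) ℂ) (hf : IsRadial f) :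
    f ∈ closure (Submodule.span ℂ G : Set (SchwartzMap (EuclideanSpace ℝ (Fin d)) ℂ)) := by
  subst hG
  exact mem_closure_of_isRadial hd hy f hf

end
end
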